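/- arXiv:2103.15271 — 13 statements merged into one kernel-verified Lean document; each statement's English description precedes it below -/
import Mathlib

section
/- Let m, n ≥ 1, let A : Matrix (Fin m) (Fin n) EReal have no +∞ entries, and let b : Fin m → EReal have no +∞ entries. Define x*(A,b) : Fin n → EReal by x*_j = ⨅_{i} s(b_i, A i j), where s(b,a) = +∞ if a = -∞ and s(b,a) = b - a (EReal subtraction) otherwise. Then x*(A,b) is a subsolution of the system A ⊗ x = b, i.e., for every i, ⨆_j (A i j + x*_j) ≤ b_i. -/
open scoped BigOperators

noncomputable section

/-- Max-plus product: `(A ⊗ x)_i = ⨆_j (A i j + x_j)` in `EReal`. -/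
def maxPlus {m n : ℕ} (A : Matrix (Fin m) (Fin n) EReal) (x : Fin n → EReal)
    (i : Fin m) : EReal :=
  ⨆ j, A i j + x j

/-- Auxiliary subtraction: `s(b,a) = +∞` if `a = -∞`, else `b - a`. -/
def sSub (b a : EReal) : EReal := if a = ⊥ then ⊤ else b - a

/-- Greatest subsolution `x*(A,b)_j = ⨅_i s(b_i, A i j)`. -/
def xstar {m n : ℕ} (A : Matrix (Fin m) (Fin n) EReal) (b : Fin m → EReal)
    (j : Fin n) : EReal :=
  ⨅ i, sSub (b i) (A i j)

/-- Objective function `F(x)_i = ⨆_j (A i j + x_j)` for real vectors `x`. -/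
def objF {m n : ℕ} (A : Matrix (Fin m) (Fin n) EReal) (x : Fin n → ℝ)
    (i : Fin m) : EReal :=
  ⨆ j, A i j + (x j : EReal)

/-- `J = {j | k_j > 0}` as a finite set. -/
def Jset {n : ℕ} (k : Fin n → ℝ) : Finset (Fin n) :=
  Finset.univ.filter (fun j => 0 < k j)

/-- Greatest lower bound `b_i = ((∑_{j ∈ J} k_j * A i j) + c) / (∑_{j ∈ J} k_j)`. -/
def glb {m n : ℕ} (A : Matrix (Fin m) (Fin n) EReal) (k : Fin n → ℝ) (c : ℝ)
    (i : Fin m) : EReal :=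
  ((∑ j ∈ Jset k, (k j : EReal) * A i j) + (c : EReal)) /
    ((∑ j ∈ Jset k, k j : ℝ) : EReal)

/-- `xt` is a globally optimal solution of the problem `(A, k, c)`. -/
def IsOptimal {m n : ℕ} (A : Matrix (Fin m) (Fin n) EReal) (k : Fin n → ℝ)
    (c : ℝ) (xt : Fin n → ℝ) : Prop :=
  (∑ j, k j * xt j = c) ∧
    ∀ x : Fin n → ℝ, (∑ j, k j * x j = c) → ∀ i, objF A xt i ≤ objF A x i

theorem stmt_0 {m n : ℕ} (hm : 1 ≤ m) (hn : 1 ≤ n)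
    (A : Matrix (Fin m) (Fin n) EReal) (hA : ∀ i j, A i j ≠ ⊤)
    (b : Fin m → EReal) (hb : ∀ i, b i ≠ ⊤) :
    ∀ i, maxPlus A (xstar A b) i ≤ b i := by
  intro i
  refine iSup_le fun j => ?_
  have h : xstar A b j ≤ sSub (b i) (A i j) := iInf_le _ i
  by_cases h0 : A i j = ⊥
  · rw [h0, EReal.bot_add]
    exact bot_le
  · rw [sSub, if_neg h0] at h
    rw [add_comm]
    exact (EReal.le_sub_iff_add_le (Or.inl h0) (Or.inl (hA i j))).1 h
end
end

section
/- Let m, n ≥ 1, let A : Matrix (Fin m) (Fin n) EReal have no +∞ entries, and let b : Fin m → EReal have no +∞ entries. Define x*(A,b) : Fin n → EReal by x*_j = ⨅_{i} s(b_i, A i j), where s(b,a) = +∞ if a = -∞ and s(b,a) = b - a (EReal subtraction) otherwise. Then x*(A,b) is the greatest subsolution of A ⊗ x = b: for every x̃ : Fin n → EReal, if ⨆_j (A i j + x̃_j) ≤ b_i for every i, then x̃_j ≤ x*_j for every j. In particular, every solution x̃ (i.e., with ⨆_j (A i j + x̃_j) = b_i for all i) satisfies x̃ ≤ x*(A,b).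 -/
open scoped BigOperators

noncomputable section

theorem stmt_1 {m n : ℕ} (hm : 1 ≤ m) (hn : 1 ≤ n)
    (A : Matrix (Fin m) (Fin n) EReal) (hA : ∀ i j, A i j ≠ ⊤)
    (b : Fin m → EReal) (hb : ∀ i, b i ≠ ⊤) :
    (∀ xt : Fin n → EReal, (∀ i, maxPlus A xt i ≤ b i) → ∀ j, xt j ≤ xstar A b j) ∧
      (∀ xt : Fin n → EReal, (∀ i, maxPlus A xt i = b i) → ∀ j, xt j ≤ xstar A b j) := by
  have key : ∀ xt : Fin n → EReal, (∀ i, maxPlus A xt i ≤ b i) → ∀ j, xt j ≤ xstar A b j := by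
    intro xt h j
    refine le_iInf fun i => ?_
    unfold sSub
    split_ifs with ha
    · exact le_top
    · rw [EReal.le_sub_iff_add_le (Or.inl ha) (Or.inl (hA i j)), add_comm]
      exact (le_iSup (fun j => A i j + xt j) j).trans (h i)
  exact ⟨key, fun xt h => key xt fun i => (h i).le⟩
end
end

section
/- Let m, n ≥ 1, let A : Matrix (Fin m) (Fin n) EReal have no +∞ entries, and let b : Fin m → EReal have no +∞ entries, with x*(A,b) defined by x*_j = ⨅_{i} s(b_i, A i j) (s(b,a) = +∞ if a = -∞, else b - a). Then the system A ⊗ x = b has a solution x̃ : Fin n → EReal (i.e., ⨆_j (A i j + x̃_j) = b_i for all i) if and only if x*(A,b) itself is a solution, i.e., ⨆_j (A i j + x*_j) = b_i for all i. -/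
open scoped BigOperators

noncomputable section

theorem le_sSub_iff {x a b : EReal} (ha : a ≠ ⊤) : x ≤ sSub b a ↔ a + x ≤ b := by
  unfold sSub
  split_ifs with h
  · simp [h]
  · rw [EReal.le_sub_iff_add_le (Or.inl h) (Or.inl ha), add_comm]

theorem stmt_2 {m n : ℕ} (hm : 1 ≤ m) (hn : 1 ≤ n)
    (A : Matrix (Fin m) (Fin n) EReal) (hA : ∀ i j, A i j ≠ ⊤)
    (b : Fin m → EReal) (hb : ∀ i, b i ≠ ⊤) :
    (∃ xt : Fin n → EReal, ∀ i, maxPlus A xt i = b i) ↔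
      (∀ i, maxPlus A (xstar A b) i = b i) := by
  constructor
  · rintro ⟨xt, hx⟩ i
    have key : ∀ j, xt j ≤ xstar A b j := fun j => le_iInf fun i =>
      (le_sSub_iff (hA i j)).2 ((le_iSup (fun j => A i j + xt j) j).trans (hx i).le)
    apply le_antisymm
    · exact iSup_le fun j => (le_sSub_iff (hA i j)).1 (iInf_le (fun i => sSub (b i) (A i j)) i)
    · rw [← hx i]
      exact iSup_mono fun j => add_le_add le_rfl (key j)
  · exact fun h => ⟨_, h⟩
end
end

section
/- (Theorem 1, part i) Under the standing assumptions on the global optimization problem, the vector b defined by b_i = ((∑_{j∈J} (k_j : EReal) * A i j) + c) / (∑_{j∈J} k_j) is a lower bound: for every x ∈ 𝒳 and every i, F_i(x) = ⨆_j (A i j + (x_j : EReal)) ≥ b_i. -/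
open scoped BigOperators

noncomputable section

theorem stmt_3 {m n : ℕ} (hm : 1 ≤ m) (hn : 1 ≤ n)
    (A : Matrix (Fin m) (Fin n) EReal) (hA : ∀ i j, A i j ≠ ⊤)
    (k : Fin n → ℝ) (hk : ∀ j, 0 ≤ k j) (hk0 : ∃ j, k j ≠ 0) (c : ℝ)
    (hrow : ∀ i, ∃ j, A i j ≠ ⊥)
    (hcol : ∀ j, (∀ i, A i j = ⊥) → 0 < k j) :
    ∀ x : Fin n → ℝ, (∑ j, k j * x j = c) → ∀ i, glb A k c i ≤ objF A x i := by
  intro x hx i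
  have hJ : ∀ j, j ∈ Jset k ↔ 0 < k j := by intro j; simp [Jset]
  obtain ⟨j0, hj0⟩ := hk0
  have hj0' : j0 ∈ Jset k := (hJ j0).2 (lt_of_le_of_ne (hk j0) (Ne.symm hj0))
  have hS : 0 < ∑ j ∈ Jset k, k j :=
    Finset.sum_pos (fun j hj => (hJ j).1 hj) ⟨j0, hj0'⟩
  have hS' : (0 : EReal) < ((∑ j ∈ Jset k, k j : ℝ) : EReal) := by exact_mod_cast hS
  have hxJ : ∑ j ∈ Jset k, k j * x j = c := by
    rw [← hx]
    apply Finset.sum_subset (Finset.subset_univ _)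
    intro j _ hj
    have h0 : k j = 0 := le_antisymm (not_lt.1 (fun h => hj ((hJ j).2 h))) (hk j)
    simp [h0]
  have hle : ∀ j, A i j + (x j : EReal) ≤ objF A x i := fun j =>
    le_iSup (fun j => A i j + (x j : EReal)) j
  unfold glb
  rw [EReal.div_le_iff_le_mul hS' (EReal.coe_ne_top _)]
  by_cases hb : ∃ j ∈ Jset k, A i j = ⊥
  · obtain ⟨j, hj, hjb⟩ := hb
    rw [← Finset.add_sum_erase _ _ hj, hjb, EReal.coe_mul_bot_of_pos ((hJ j).1 hj)]
    simp
  · push Not at hb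
    have ha : ∀ j ∈ Jset k, A i j = (((A i j).toReal : ℝ) : EReal) := fun j hj =>
      (EReal.coe_toReal (hA i j) (hb j hj)).symm
    have hsum : (∑ j ∈ Jset k, (k j : EReal) * A i j)
        = ((∑ j ∈ Jset k, k j * (A i j).toReal : ℝ) : EReal) := by
      have hcoe : ∀ (s : Finset (Fin n)) (f : Fin n → ℝ),
          ((∑ j ∈ s, f j : ℝ) : EReal) = ∑ j ∈ s, (f j : EReal) := by
        intro s f
        induction s using Finset.induction_on with
        | empty => simp
        | insert a s h ih => rw [Finset.sum_insert h, Finset.sum_insert h, EReal.coe_add, ih]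
      rw [hcoe]
      apply Finset.sum_congr rfl
      intro j hj
      rw [EReal.coe_mul, ← ha j hj]
    rw [hsum]
    generalize objF A x i = M at hle
    induction M with
    | bot =>
      exfalso
      have h := hle j0
      rw [ha j0 hj0', ← EReal.coe_add, le_bot_iff] at h
      exact EReal.coe_ne_bot _ h
    | top => rw [EReal.mul_top_of_pos hS']; exact le_top
    | coe M =>
      rw [← EReal.coe_add, ← EReal.coe_mul, EReal.coe_le_coe_iff, ← hxJ,
        ← Finset.sum_add_distrib, Finset.sum_mul]
      apply Finset.sum_le_sum
      intro j hj
      have h := hle j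
      rw [ha j hj, ← EReal.coe_add, EReal.coe_le_coe_iff] at h
      rw [← mul_add]
      exact mul_le_mul_of_nonneg_left h (hk j)
end
end

section
/- (Theorem 1, part ii) Under the standing assumptions on the global optimization problem, b defined by b_i = ((∑_{j∈J} (k_j : EReal) * A i j) + c) / (∑_{j∈J} k_j) is the greatest lower bound: if y : Fin m → EReal satisfies F_i(x) ≥ y_i for every x ∈ 𝒳 and every i, then y_i ≤ b_i for every i. -/
open scoped BigOperators

noncomputable section

theorem objF_le_aux {m n : ℕ} (A : Matrix (Fin m) (Fin n) EReal) (hA : ∀ i j, A i j ≠ ⊤)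
    (x : Fin n → ℝ) (i : Fin m) (t : ℝ)
    (h : ∀ j, A i j ≠ ⊥ → (A i j).toReal + x j ≤ t) : objF A x i ≤ (t : EReal) := by
  unfold objF
  refine iSup_le fun j => ?_
  by_cases hb : A i j = ⊥
  · rw [hb, EReal.bot_add]; exact bot_le
  · rw [← EReal.coe_toReal (hA i j) hb]
    exact_mod_cast h j hb

theorem stmt_4 {m n : ℕ} (hm : 1 ≤ m) (hn : 1 ≤ n)
    (A : Matrix (Fin m) (Fin n) EReal) (hA : ∀ i j, A i j ≠ ⊤)
    (k : Fin n → ℝ) (hk : ∀ j, 0 ≤ k j) (hk0 : ∃ j, k j ≠ 0) (c : ℝ)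
    (hrow : ∀ i, ∃ j, A i j ≠ ⊥)
    (hcol : ∀ j, (∀ i, A i j = ⊥) → 0 < k j) :
    ∀ y : Fin m → EReal,
      (∀ x : Fin n → ℝ, (∑ j, k j * x j = c) → ∀ i, y i ≤ objF A x i) →
        ∀ i, y i ≤ glb A k c i := by
  intro y hy i
  have hS : 0 < ∑ j ∈ Jset k, k j := by
    obtain ⟨j, hj⟩ := hk0
    have hj' : 0 < k j := lt_of_le_of_ne (hk j) (Ne.symm hj)
    refine Finset.sum_pos (fun j hj => by simpa [Jset] using hj) ⟨j, by simpa [Jset] using hj'⟩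
  have hJsum : ∀ f : Fin n → ℝ, ∑ j, k j * f j = ∑ j ∈ Jset k, k j * f j := by
    intro f
    refine (Finset.sum_subset (Finset.subset_univ _) ?_).symm
    intro j _ hj
    have h0 : k j = 0 := le_antisymm (by simpa [Jset] using hj) (hk j)
    simp [h0]
  by_cases hfin : ∀ j ∈ Jset k, A i j ≠ ⊥
  · have hb : glb A k c i =
        (((∑ j ∈ Jset k, k j * (A i j).toReal) + c) / (∑ j ∈ Jset k, k j) : ℝ) := by
      unfold glb
      have h1 : ∑ j ∈ Jset k, (k j : EReal) * A i j
          = ((∑ j ∈ Jset k, k j * (A i j).toReal : ℝ) : EReal) := by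
        rw [show ((∑ j ∈ Jset k, k j * (A i j).toReal : ℝ) : EReal) = ∑ j ∈ Jset k, ((k j * (A i j).toReal : ℝ) : EReal) from
          map_sum (⟨⟨Real.toEReal, EReal.coe_zero⟩, EReal.coe_add⟩ : ℝ →+ EReal) _ _]
        refine Finset.sum_congr rfl fun j hj => ?_
        rw [EReal.coe_mul, EReal.coe_toReal (hA i j) (hfin j hj)]
      rw [h1, EReal.coe_div, EReal.coe_add]
    rw [hb]
    set t : ℝ := ((∑ j ∈ Jset k, k j * (A i j).toReal) + c) / (∑ j ∈ Jset k, k j) with ht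
    refine (hy (fun j => t - (A i j).toReal) ?_ i).trans
      (objF_le_aux A hA _ i t fun j _ => by linarith)
    rw [hJsum]
    simp only [mul_sub, Finset.sum_sub_distrib, ← Finset.sum_mul]
    rw [ht, mul_div_cancel₀ _ hS.ne']
    ring
  · push Not at hfin
    obtain ⟨j0, hj0, hbot⟩ := hfin
    have hk0' : 0 < k j0 := by simpa [Jset] using hj0
    suffices h : y i = ⊥ by rw [h]; exact bot_le
    rw [EReal.eq_bot_iff_forall_lt]
    intro t
    let s : ℝ := t - 1
    let r : ℝ := (c - ∑ j ∈ Finset.univ.erase j0, k j * (s - (A i j).toReal)) / k j0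
    let x : Fin n → ℝ := fun j => if j = j0 then r else s - (A i j).toReal
    have hx : ∑ j, k j * x j = c := by
      rw [← Finset.add_sum_erase _ _ (Finset.mem_univ j0)]
      have h1 : ∑ j ∈ Finset.univ.erase j0, k j * x j
          = ∑ j ∈ Finset.univ.erase j0, k j * (s - (A i j).toReal) := by
        refine Finset.sum_congr rfl fun j hj => ?_
        simp [x, Finset.ne_of_mem_erase hj]
      have h2 : k j0 * x j0 = c - ∑ j ∈ Finset.univ.erase j0, k j * (s - (A i j).toReal) := by
        simp only [x, if_true, r]
        rw [mul_div_cancel₀ _ hk0'.ne']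
      rw [h1, h2]; ring
    have h3 : y i ≤ (s : EReal) := (hy x hx i).trans (objF_le_aux A hA x i s fun j hj => by
      have hne : j ≠ j0 := fun h => hj (h ▸ hbot)
      simp [x, hne])
    refine h3.trans_lt ?_
    exact_mod_cast (by simp [s] : s < t)
end
end

section
/- (Lemma 2, part i) Under the standing assumptions on the global optimization problem, if the problem is solvable — i.e., there exists x̃ ∈ 𝒳 such that F_i(x) ≥ F_i(x̃) for every x ∈ 𝒳 and every i — then the greatest lower bound b is finite: for every i, b_i ≠ -∞ and b_i ≠ +∞ (b_i is a real number). -/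
open scoped BigOperators

noncomputable section

theorem stmt_6 {m n : ℕ} (hm : 1 ≤ m) (hn : 1 ≤ n)
    (A : Matrix (Fin m) (Fin n) EReal) (hA : ∀ i j, A i j ≠ ⊤)
    (k : Fin n → ℝ) (hk : ∀ j, 0 ≤ k j) (hk0 : ∃ j, k j ≠ 0) (c : ℝ)
    (hrow : ∀ i, ∃ j, A i j ≠ ⊥)
    (hcol : ∀ j, (∀ i, A i j = ⊥) → 0 < k j)
    (hsolv : ∃ xt : Fin n → ℝ, IsOptimal A k c xt) :
    ∀ i, glb A k c i ≠ ⊥ ∧ glb A k c i ≠ ⊤ := by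
  obtain ⟨xt, hx, hopt⟩ := hsolv
  intro i
  have key : ∀ p ∈ Jset k, A i p ≠ ⊥ := by
    intro p hp hbot
    have hkp : 0 < k p := by simpa [Jset] using hp
    let x : Fin n → ℝ := fun j => xt j - 1 + (if j = p then (∑ l, k l) / k p else 0)
    have hxc : ∑ j, k j * x j = c := by
      have h1 : ∀ j, k j * x j
          = k j * xt j - k j + (if j = p then (∑ l, k l) else 0) := by
        intro j
        by_cases h : j = p
        · subst h
          simp only [x, if_true]
          field_simp
        · simp only [x, h, if_false]
          ring
      simp only [h1, Finset.sum_add_distrib, Finset.sum_sub_distrib, Finset.sum_ite_eq',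
        Finset.mem_univ, if_true]
      linarith
    have hle := hopt x hxc i
    haveI : Nonempty (Fin n) := ⟨p⟩
    obtain ⟨j0, hj0⟩ := exists_eq_ciSup_of_finite (f := fun j => A i j + (x j : EReal))
    have hj0' : objF A x i = A i j0 + (x j0 : EReal) := hj0.symm
    rw [hj0'] at hle
    have hge : ∀ j, A i j + (xt j : EReal) ≤ A i j0 + (x j0 : EReal) := fun j =>
      (le_iSup (fun j => A i j + (xt j : EReal)) j).trans hle
    have hb : A i j0 ≠ ⊥ := by
      intro h0
      obtain ⟨j1, hj1⟩ := hrow i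
      have h2 := hge j1
      rw [h0, EReal.bot_add, le_bot_iff, EReal.add_eq_bot_iff] at h2
      rcases h2 with h2 | h2
      · exact hj1 h2
      · exact EReal.coe_ne_bot _ h2
    have hne : j0 ≠ p := fun h => hb (h ▸ hbot)
    have h3 := hge j0
    obtain ⟨a, ha⟩ : ∃ a : ℝ, (a : EReal) = A i j0 :=
      ⟨_, EReal.coe_toReal (hA i j0) hb⟩
    rw [← ha] at h3
    have h4 : a + xt j0 ≤ a + x j0 := by exact_mod_cast h3
    simp only [x, hne, if_false] at h4
    linarith
  have hs : ∃ r : ℝ, glb A k c i = (r : EReal) := by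
    have h5 : ∑ j ∈ Jset k, (k j : EReal) * A i j
        = ((∑ j ∈ Jset k, k j * (A i j).toReal : ℝ) : EReal) := by
      have hco : ∀ (s : Finset (Fin n)) (f : Fin n → ℝ),
          ((∑ j ∈ s, f j : ℝ) : EReal) = ∑ j ∈ s, (f j : EReal) := by
        intro s f
        induction s using Finset.induction_on with
        | empty => simp
        | insert a s ha ih => simp [Finset.sum_insert ha, ih]
      rw [hco]
      refine Finset.sum_congr rfl fun j hj => ?_
      rw [EReal.coe_mul, EReal.coe_toReal (hA i j) (key j hj)]
    refine ⟨((∑ j ∈ Jset k, k j * (A i j).toReal) + c) / (∑ j ∈ Jset k, k j), ?_⟩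
    rw [glb, h5, EReal.coe_div, EReal.coe_add]
  obtain ⟨r, hr⟩ := hs
  rw [hr]
  exact ⟨EReal.coe_ne_bot r, EReal.coe_ne_top r⟩
end
end

section
/- (Lemma 2, part ii) Under the standing assumptions on the global optimization problem, if the problem is solvable — i.e., there exists x̃ ∈ 𝒳 such that F_i(x) ≥ F_i(x̃) for every x ∈ 𝒳 and every i — then the greatest subsolution x*(A,b), defined by x*_j = ⨅_{i} s(b_i, A i j) (s(b,a) = +∞ if a = -∞, else b - a in EReal), is finite: for every j, x*_j ≠ -∞ and x*_j ≠ +∞ (x*_j is a real number). -/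
open scoped BigOperators

noncomputable section

theorem key_ne_bot {m n : ℕ}
    (A : Matrix (Fin m) (Fin n) EReal) (hA : ∀ i j, A i j ≠ ⊤)
    (k : Fin n → ℝ) (c : ℝ)
    (hrow : ∀ i, ∃ j, A i j ≠ ⊥)
    (xt : Fin n → ℝ) (hxt : IsOptimal A k c xt) (i : Fin m) (j0 : Fin n) (hj0 : 0 < k j0) :
    A i j0 ≠ ⊥ := by
  intro hbot
  obtain ⟨j1, hj1⟩ := hrow i
  set M : ℝ := ∑ j, |(A i j).toReal| with hM
  have hle : ∀ j, (A i j).toReal ≤ M := fun j =>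
    (le_abs_self _).trans
      (Finset.single_le_sum (f := fun j => |(A i j).toReal|) (fun _ _ => abs_nonneg _)
        (Finset.mem_univ j))
  set r : ℝ := (A i j1).toReal + xt j1 with hr
  set d : ℝ := r - 1 - M with hd
  let x : Fin n → ℝ := fun j =>
    if j = j0 then (c - ∑ j ∈ Finset.univ.erase j0, k j * d) / k j0 else d
  have hx : ∑ j, k j * x j = c := by
    rw [← Finset.add_sum_erase _ _ (Finset.mem_univ j0)]
    have h1 : ∑ j ∈ Finset.univ.erase j0, k j * x j = ∑ j ∈ Finset.univ.erase j0, k j * d := by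
      apply Finset.sum_congr rfl
      intro j hj
      simp [x, Finset.ne_of_mem_erase hj]
    rw [h1]
    simp only [x, if_true]
    rw [mul_div_cancel₀ _ hj0.ne', sub_add_cancel]
  have h2 := hxt.2 x hx i
  have h3 : ((r : ℝ) : EReal) ≤ objF A xt i := by
    refine le_trans ?_ (le_iSup (fun j => A i j + (xt j : EReal)) j1)
    rw [hr, EReal.coe_add, EReal.coe_toReal (hA i j1) hj1]
  have h4 : objF A x i ≤ ((r - 1 : ℝ) : EReal) := by
    refine iSup_le fun j => ?_
    by_cases hj : j = j0
    · subst hj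
      simp [hbot]
    · have h5 : A i j + (x j : EReal) ≤ (((A i j).toReal + d : ℝ) : EReal) := by
        rw [EReal.coe_add]
        simp only [x, hj, if_false]
        gcongr
        exact EReal.le_coe_toReal (hA i j)
      refine h5.trans ?_
      rw [EReal.coe_le_coe_iff]
      have := hle j
      linarith
  have h6 := (h3.trans h2).trans h4
  rw [EReal.coe_le_coe_iff] at h6
  linarith

theorem coe_sum_ereal {ι : Type*} (s : Finset ι) (f : ι → ℝ) :
    ((∑ j ∈ s, f j : ℝ) : EReal) = ∑ j ∈ s, (f j : EReal) := by
  classical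
  induction s using Finset.induction_on with
  | empty => simp
  | insert a s ha ih => rw [Finset.sum_insert ha, Finset.sum_insert ha, EReal.coe_add, ih]

theorem glb_real {m n : ℕ}
    (A : Matrix (Fin m) (Fin n) EReal) (hA : ∀ i j, A i j ≠ ⊤)
    (k : Fin n → ℝ) (c : ℝ) (i : Fin m) (h : ∀ j, 0 < k j → A i j ≠ ⊥) :
    ∃ r : ℝ, glb A k c i = (r : EReal) := by
  have h1 : ∑ j ∈ Jset k, (k j : EReal) * A i j
      = ((∑ j ∈ Jset k, k j * (A i j).toReal : ℝ) : EReal) := by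
    rw [coe_sum_ereal]
    apply Finset.sum_congr rfl
    intro j hj
    rw [EReal.coe_mul, EReal.coe_toReal (hA i j) (h j (by simpa [Jset] using hj))]
  refine ⟨((∑ j ∈ Jset k, k j * (A i j).toReal) + c) / (∑ j ∈ Jset k, k j), ?_⟩
  rw [glb, h1, EReal.coe_div, EReal.coe_add]

theorem stmt_7 {m n : ℕ} (hm : 1 ≤ m) (hn : 1 ≤ n)
    (A : Matrix (Fin m) (Fin n) EReal) (hA : ∀ i j, A i j ≠ ⊤)
    (k : Fin n → ℝ) (hk : ∀ j, 0 ≤ k j) (hk0 : ∃ j, k j ≠ 0) (c : ℝ)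
    (hrow : ∀ i, ∃ j, A i j ≠ ⊥)
    (hcol : ∀ j, (∀ i, A i j = ⊥) → 0 < k j)
    (hsolv : ∃ xt : Fin n → ℝ, IsOptimal A k c xt) :
    ∀ j, xstar A (glb A k c) j ≠ ⊥ ∧ xstar A (glb A k c) j ≠ ⊤ := by
  obtain ⟨xt, hxt⟩ := hsolv
  have hfin := key_ne_bot A hA k c hrow xt hxt
  intro j
  choose b hb using fun i => glb_real A hA k c i (hfin i)
  have hs : ∀ i, A i j ≠ ⊥ →
      sSub (glb A k c i) (A i j) = ((b i - (A i j).toReal : ℝ) : EReal) := by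
    intro i hi
    rw [sSub, if_neg hi, hb, EReal.coe_sub, EReal.coe_toReal (hA i j) hi]
  constructor
  · haveI : Nonempty (Fin m) := ⟨⟨0, hm⟩⟩
    obtain ⟨i, hi⟩ := exists_eq_ciInf_of_finite (f := fun i => sSub (glb A k c i) (A i j))
    rw [xstar, ← hi]
    by_cases h : A i j = ⊥
    · simp [sSub, h]
    · simp only [hs i h]
      exact EReal.coe_ne_bot _
  · have : ∃ i, A i j ≠ ⊥ := by
      by_contra! hc
      exact hfin ⟨0, hm⟩ j (hcol j hc) (hc _)
    obtain ⟨i, hi⟩ := this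
    have h1 : xstar A (glb A k c) j ≤ _ := iInf_le _ i
    rw [hs i hi] at h1
    exact (h1.trans_lt (EReal.coe_lt_top _)).ne
end
end

section
/- (Theorem 2, (i) ⇒ (ii)) Under the standing assumptions on the global optimization problem, if the problem is solvable — i.e., there exists x̃ ∈ 𝒳 such that F_i(x) ≥ F_i(x̃) for every x ∈ 𝒳 and every i — then equation (7) holds: ∑_{j∈J} (k_j : EReal) * x*_j(A,b) = (c : EReal). -/
open scoped BigOperators

noncomputable section

lemma aux_objF_real {m n : ℕ} (hn : 1 ≤ n)
    (A : Matrix (Fin m) (Fin n) EReal) (hA : ∀ i j, A i j ≠ ⊤)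
    (hrow : ∀ i, ∃ j, A i j ≠ ⊥) (x : Fin n → ℝ) (i : Fin m) :
    ∃ M : ℝ, objF A x i = (M : EReal) := by
  have : Nonempty (Fin n) := ⟨⟨0, hn⟩⟩
  have h1 : objF A x i ≠ ⊤ := by
    obtain ⟨j, hj⟩ := exists_eq_ciSup_of_finite (f := fun j => A i j + (x j : EReal))
    unfold objF
    rw [← hj]
    exact EReal.add_ne_top (hA i j) (EReal.coe_ne_top _)
  have h2 : objF A x i ≠ ⊥ := by
    obtain ⟨j, hj⟩ := hrow i
    intro h
    have h3 : A i j + (x j : EReal) ≤ objF A x i :=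
      le_iSup (fun j => A i j + (x j : EReal)) j
    rw [h, le_bot_iff, EReal.add_eq_bot_iff] at h3
    rcases h3 with h3 | h3
    · exact hj h3
    · exact EReal.coe_ne_bot _ h3
  exact ⟨(objF A x i).toReal, (EReal.coe_toReal h1 h2).symm⟩

lemma aux_tight {m n : ℕ} (hn : 1 ≤ n)
    (A : Matrix (Fin m) (Fin n) EReal)
    (k : Fin n → ℝ) (hk : ∀ j, 0 ≤ k j) (c : ℝ)
    (xt : Fin n → ℝ) (hopt : IsOptimal A k c xt) (i : Fin m) (M : ℝ)
    (hM : objF A xt i = (M : EReal)) (j₀ : Fin n) (hj : 0 < k j₀) :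
    A i j₀ + (xt j₀ : EReal) = M := by
  have : Nonempty (Fin n) := ⟨⟨0, hn⟩⟩
  have hle : ∀ j, A i j + (xt j : EReal) ≤ M := fun j => by
    rw [← hM]; exact le_iSup (fun j => A i j + (xt j : EReal)) j
  by_contra hne
  have hlt := lt_of_le_of_ne (hle j₀) hne
  obtain ⟨d, hd1, hd2⟩ := EReal.lt_iff_exists_real_btwn.1 hlt
  have hd2' : d < M := by exact_mod_cast hd2
  set K := ∑ j, k j with hK
  have hKpos : 0 < K := lt_of_lt_of_le hj
    (Finset.single_le_sum (f := k) (fun j _ => hk j) (Finset.mem_univ j₀))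
  set g := M - d with hg
  have hgpos : 0 < g := by linarith
  set e := g * k j₀ / (2 * K) with he
  have hepos : 0 < e := by positivity
  have heK : e * K = k j₀ * (g / 2) := by rw [he]; field_simp
  let x : Fin n → ℝ := fun j => xt j - e + (if j = j₀ then g / 2 else 0)
  have hx : ∑ j, k j * x j = c := by
    have : ∀ j, k j * x j = k j * xt j - k j * e + (if j = j₀ then k j * (g / 2) else 0) := by
      intro j
      simp only [x]
      split_ifs <;> ring
    simp only [this, Finset.sum_add_distrib, Finset.sum_sub_distrib, ← Finset.sum_mul]
    rw [hopt.1, Finset.sum_ite_eq' Finset.univ j₀]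
    simp only [Finset.mem_univ, if_true]
    linarith
  have h := hopt.2 x hx i
  rw [hM] at h
  obtain ⟨j, hj'⟩ := exists_eq_ciSup_of_finite (f := fun j => A i j + (x j : EReal))
  unfold objF at h
  rw [← hj'] at h
  revert h
  have hreal : ∀ a : EReal, ∀ u v M' d' : ℝ, a + (u : EReal) ≤ (d' : EReal) →
      v - u < M' - d' → ¬ ((M' : EReal) ≤ a + (v : EReal)) := by
    intro a u v M' d' h1 h2 h3
    induction a with
    | bot => simp at h3
    | top => simp at h1
    | coe a =>
      have h1' : a + u ≤ d' := by exact_mod_cast h1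
      have h3' : M' ≤ a + v := by exact_mod_cast h3
      linarith
  by_cases hjj : j = j₀
  · subst hjj
    refine hreal _ _ _ _ _ hd1.le ?_
    simp only [x, if_true]
    linarith
  · refine hreal _ _ _ _ _ (hle j) ?_
    simp only [x, hjj, if_false]
    linarith

theorem stmt_9 {m n : ℕ} (hm : 1 ≤ m) (hn : 1 ≤ n)
    (A : Matrix (Fin m) (Fin n) EReal) (hA : ∀ i j, A i j ≠ ⊤)
    (k : Fin n → ℝ) (hk : ∀ j, 0 ≤ k j) (hk0 : ∃ j, k j ≠ 0) (c : ℝ)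
    (hrow : ∀ i, ∃ j, A i j ≠ ⊥)
    (hcol : ∀ j, (∀ i, A i j = ⊥) → 0 < k j)
    (hsolv : ∃ xt : Fin n → ℝ, IsOptimal A k c xt) :
    ∑ j ∈ Jset k, (k j : EReal) * xstar A (glb A k c) j = (c : EReal) := by
  obtain ⟨xt, hopt⟩ := hsolv
  choose M hM using fun i => aux_objF_real hn A hA hrow xt i
  have hJ : ∀ j, j ∈ Jset k ↔ 0 < k j := fun j => by simp [Jset]
  have hAr : ∀ i, ∀ j ∈ Jset k, A i j = ((M i - xt j : ℝ) : EReal) := by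
    intro i j hj
    have h := aux_tight hn A k hk c xt hopt i (M i) (hM i) j ((hJ j).1 hj)
    generalize A i j = a at h
    induction a with
    | bot => simp at h
    | top => simp at h
    | coe a =>
      have h' : a + xt j = M i := by exact_mod_cast h
      rw [← h']; simp
  have hsum : ∑ j ∈ Jset k, k j * xt j = c := by
    rw [← hopt.1]
    refine Finset.sum_subset (Finset.subset_univ _) ?_
    intro j _ hj
    rw [hJ, not_lt] at hj
    rw [le_antisymm hj (hk j), zero_mul]
  have hcoe : ∀ f : Fin n → ℝ, ∑ j ∈ Jset k, ((f j : ℝ) : EReal)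
      = ((∑ j ∈ Jset k, f j : ℝ) : EReal) := by
    intro f
    induction Jset k using Finset.induction_on with
    | empty => simp
    | insert a s ha ih => rw [Finset.sum_insert ha, Finset.sum_insert ha, ih, EReal.coe_add]
  have hKpos : 0 < ∑ j ∈ Jset k, k j := by
    obtain ⟨j, hj⟩ := hk0
    exact Finset.sum_pos (fun j hj => (hJ j).1 hj)
      ⟨j, (hJ j).2 (lt_of_le_of_ne (hk j) (Ne.symm hj))⟩
  have hb : ∀ i, glb A k c i = (M i : EReal) := by
    intro i
    unfold glb
    have h1 : ∑ j ∈ Jset k, (k j : EReal) * A i j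
        = ∑ j ∈ Jset k, ((k j * (M i - xt j) : ℝ) : EReal) :=
      Finset.sum_congr rfl fun j hj => by rw [hAr i j hj, EReal.coe_mul]
    rw [h1, hcoe, ← EReal.coe_add, ← EReal.coe_div]
    congr 1
    simp only [mul_sub, Finset.sum_sub_distrib, ← Finset.sum_mul]
    rw [hsum]
    field_simp
    ring
  have : Nonempty (Fin m) := ⟨⟨0, hm⟩⟩
  have hxs : ∀ j ∈ Jset k, xstar A (glb A k c) j = (xt j : EReal) := by
    intro j hj
    unfold xstar
    have : ∀ i, sSub (glb A k c i) (A i j) = (xt j : EReal) := by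
      intro i
      unfold sSub
      rw [hb, hAr i j hj, if_neg (EReal.coe_ne_bot _), ← EReal.coe_sub]
      congr 1
      ring
    simp only [this, ciInf_const]
  refine Eq.trans ?_ ((hcoe fun j => k j * xt j).trans (congrArg _ hsum))
  exact Finset.sum_congr rfl fun j hj => by rw [hxs j hj, EReal.coe_mul]
end
end

section
/- Under the standing assumptions on the global optimization problem, if the problem is solvable, then every globally optimal solution attains the greatest lower bound: for every globally optimal solution x̃ ∈ 𝒳 and every i, F_i(x̃) = b_i. -/
open scoped BigOperators

noncomputable section

theorem stmt_12 {m n : ℕ} (hm : 1 ≤ m) (hn : 1 ≤ n)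
    (A : Matrix (Fin m) (Fin n) EReal) (hA : ∀ i j, A i j ≠ ⊤)
    (k : Fin n → ℝ) (hk : ∀ j, 0 ≤ k j) (hk0 : ∃ j, k j ≠ 0) (c : ℝ)
    (hrow : ∀ i, ∃ j, A i j ≠ ⊥)
    (hcol : ∀ j, (∀ i, A i j = ⊥) → 0 < k j)
    (hsolv : ∃ xt : Fin n → ℝ, IsOptimal A k c xt) :
    ∀ xt : Fin n → ℝ, IsOptimal A k c xt → ∀ i, objF A xt i = glb A k c i := by
  intro xt ⟨hfeas, hopt⟩ i
  obtain ⟨jp, hjp⟩ := hk0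
  have hJmem : ∀ j, j ∈ Jset k ↔ 0 < k j := by intro j; simp [Jset]
  have hsum : ∀ f : Fin n → ℝ, ∑ j ∈ Jset k, k j * f j = ∑ j, k j * f j := by
    intro f
    apply Finset.sum_subset (Finset.subset_univ _)
    intro j _ hj
    have : k j = 0 := le_antisymm (not_lt.1 (fun h => hj ((hJmem j).2 h))) (hk j)
    simp [this]
  have hKpos : 0 < ∑ j ∈ Jset k, k j :=
    Finset.sum_pos (fun j hj => (hJmem j).1 hj)
      ⟨jp, (hJmem jp).2 (lt_of_le_of_ne (hk jp) (Ne.symm hjp))⟩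
  have hKeq : ∑ j ∈ Jset k, k j = ∑ j, k j := by simpa using hsum (fun _ => 1)
  have hcoe : ∀ j, A i j ≠ ⊥ → A i j = ((A i j).toReal : EReal) := fun j h =>
    (EReal.coe_toReal (hA i j) h).symm
  have hcs : ∀ (s : Finset (Fin n)) (f : Fin n → ℝ),
      ((∑ j ∈ s, f j : ℝ) : EReal) = ∑ j ∈ s, (f j : EReal) := by
    intro s f
    induction s using Finset.cons_induction with
    | empty => simp
    | cons a s ha ih => rw [Finset.sum_cons, Finset.sum_cons, EReal.coe_add, ih]
  by_cases hfin : ∀ j ∈ Jset k, A i j ≠ ⊥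
  · have hglb : glb A k c i =
        (((∑ j, k j * (A i j).toReal + c) / (∑ j, k j) : ℝ) : EReal) := by
      unfold glb
      have h1 : ∑ j ∈ Jset k, (k j : EReal) * A i j
          = ((∑ j, k j * (A i j).toReal : ℝ) : EReal) := by
        rw [← hsum, hcs]
        refine Finset.sum_congr rfl fun j hj => ?_
        rw [EReal.coe_mul, ← hcoe j (hfin j hj)]
      rw [h1, hKeq, EReal.coe_div, EReal.coe_add]
    rw [hglb]
    rw [hKeq] at hKpos
    set b : ℝ := (∑ j, k j * (A i j).toReal + c) / (∑ j, k j) with hb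
    have hbK : (∑ j, k j) * b = ∑ j, k j * (A i j).toReal + c := by
      rw [hb]; field_simp
    apply le_antisymm
    · refine (hopt (fun j => b - (A i j).toReal) ?_ i).trans ?_
      · simp only [mul_sub, Finset.sum_sub_distrib]
        rw [← Finset.sum_mul, hbK]; ring
      · refine iSup_le fun j => ?_
        by_cases h : A i j = ⊥
        · simp [h]
        · rw [hcoe j h, ← EReal.coe_add]
          exact EReal.coe_le_coe_iff.2 (by linarith)
    · have : ∃ j ∈ Jset k, b ≤ (A i j).toReal + xt j := by
        by_contra! hcon
        have h2 : ∑ j ∈ Jset k, k j * ((A i j).toReal + xt j) < ∑ j ∈ Jset k, k j * b := by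
          apply Finset.sum_lt_sum_of_nonempty
          · exact ⟨jp, (hJmem jp).2 (lt_of_le_of_ne (hk jp) (Ne.symm hjp))⟩
          · intro j hj
            exact mul_lt_mul_of_pos_left (hcon j hj) ((hJmem j).1 hj)
        rw [hsum, hsum (fun _ => b), ← Finset.sum_mul, hbK] at h2
        simp only [mul_add, Finset.sum_add_distrib] at h2
        linarith
      obtain ⟨j, hj, hjb⟩ := this
      refine le_trans ?_ (le_iSup (fun j => A i j + (xt j : EReal)) j)
      rw [hcoe j (hfin j hj), ← EReal.coe_add]
      exact EReal.coe_le_coe_iff.2 hjb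
  · push Not at hfin
    obtain ⟨j0, hj0, hbot⟩ := hfin
    have hk0 := (hJmem j0).1 hj0
    have hglb : glb A k c i = ⊥ := by
      unfold glb
      rw [← Finset.add_sum_erase _ _ hj0, hbot, EReal.coe_mul_bot_of_pos hk0,
        EReal.bot_add, EReal.bot_add]
      exact EReal.bot_div_of_pos_ne_top (by exact_mod_cast hKpos) (EReal.coe_ne_top _)
    rw [hglb, EReal.eq_bot_iff_forall_lt]
    intro r
    refine lt_of_le_of_lt ?_ (EReal.coe_lt_coe_iff.2 (sub_one_lt r))
    generalize r - 1 = r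
    refine (hopt (fun j => (r - (A i j).toReal) + if j = j0 then
      (c - ∑ j, k j * (r - (A i j).toReal)) / k j0 else 0) ?_ i).trans ?_
    · simp only [mul_add, Finset.sum_add_distrib, mul_ite, mul_zero, Finset.sum_ite_eq',
        Finset.sum_ite_eq, Finset.mem_univ, if_true]
      rw [mul_div_cancel₀ _ hk0.ne']
      ring
    · refine iSup_le fun j => ?_
      by_cases h : A i j = ⊥
      · simp [h]
      · have hne : j ≠ j0 := fun e => h (e ▸ hbot)
        simp only [if_neg hne, add_zero]
        rw [hcoe j h, ← EReal.coe_add, EReal.toReal_coe]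
        exact EReal.coe_le_coe_iff.2 (by linarith)
end
end

section
/- (Theorem 3, sufficiency) Under the standing assumptions on the global optimization problem, if the problem is solvable and k_j > 0 for every j ∈ Fin n, then the globally optimal solution is unique: there is exactly one x̃ ∈ 𝒳 with F_i(x) ≥ F_i(x̃) for every x ∈ 𝒳 and every i. -/
open scoped BigOperators

noncomputable section

theorem stmt_13 {m n : ℕ} (hm : 1 ≤ m) (hn : 1 ≤ n)
    (A : Matrix (Fin m) (Fin n) EReal) (hA : ∀ i j, A i j ≠ ⊤)
    (k : Fin n → ℝ) (hk : ∀ j, 0 ≤ k j) (hk0 : ∃ j, k j ≠ 0) (c : ℝ)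
    (hrow : ∀ i, ∃ j, A i j ≠ ⊥)
    (hcol : ∀ j, (∀ i, A i j = ⊥) → 0 < k j)
    (hsolv : ∃ xt : Fin n → ℝ, IsOptimal A k c xt)
    (hpos : ∀ j, 0 < k j) :
    ∃! xt : Fin n → ℝ, IsOptimal A k c xt := by
  obtain ⟨x, hx⟩ := hsolv
  refine ⟨x, hx, ?_⟩
  intro y hy
  by_contra hne
  have i : Fin m := ⟨0, hm⟩
  haveI : Nonempty (Fin n) := ⟨⟨0, hn⟩⟩
  obtain ⟨r, hr⟩ : ∃ r : ℝ, objF A x i = (r : EReal) := by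
    have h1 : objF A x i ≠ ⊥ := by
      obtain ⟨j, hj⟩ := hrow i
      intro h
      have h2 : A i j + (x j : EReal) ≤ objF A x i :=
        le_iSup (fun j => A i j + (x j : EReal)) j
      rw [h, le_bot_iff, EReal.add_eq_bot_iff] at h2
      rcases h2 with h2 | h2
      · exact hj h2
      · exact EReal.coe_ne_bot _ h2
    have h2 : objF A x i ≠ ⊤ := by
      obtain ⟨j, hj⟩ := exists_eq_ciSup_of_finite (f := fun j => A i j + (x j : EReal))
      unfold objF
      rw [← hj]
      exact EReal.add_ne_top (hA i j) (EReal.coe_ne_top _)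
    exact ⟨(objF A x i).toReal, (EReal.coe_toReal h2 h1).symm⟩
  have hr' : objF A y i = (r : EReal) := by
    rw [← hr]
    exact le_antisymm (hy.2 x hx.1 i) (hx.2 y hy.1 i)
  have hlt : ∑ j, k j * x j < ∑ j, k j * max (x j) (y j) := by
    apply lt_of_le_of_ne
    · exact Finset.sum_le_sum fun j _ => mul_le_mul_of_nonneg_left (le_max_left _ _) (hk j)
    · intro heq
      apply hne
      have e1 := (Finset.sum_eq_sum_iff_of_le
        (fun j _ => mul_le_mul_of_nonneg_left (le_max_left (x j) (y j)) (hk j))).1 heq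
      have e2 := (Finset.sum_eq_sum_iff_of_le
        (fun j _ => mul_le_mul_of_nonneg_left (le_max_right (x j) (y j)) (hk j))).1
        ((hy.1.trans hx.1.symm).trans heq)
      funext j
      have a := mul_left_cancel₀ (hpos j).ne' (e1 j (Finset.mem_univ j))
      have b := mul_left_cancel₀ (hpos j).ne' (e2 j (Finset.mem_univ j))
      exact b.trans a.symm
  have hK : 0 < ∑ j, k j := Finset.sum_pos (fun j _ => hpos j) Finset.univ_nonempty
  obtain ⟨d, hd⟩ : ∃ d, d = (∑ j, k j * max (x j) (y j) - c) / ∑ j, k j := ⟨_, rfl⟩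
  have hd0 : 0 < d := by
    rw [hd]
    apply div_pos _ hK
    rw [hx.1] at hlt
    linarith
  have hz : ∑ j, k j * (max (x j) (y j) - d) = c := by
    simp only [mul_sub, Finset.sum_sub_distrib, ← Finset.sum_mul]
    rw [hd, mul_div_cancel₀ _ hK.ne']
    ring
  have h3 := hx.2 _ hz i
  have h4 : objF A (fun j => max (x j) (y j) - d) i ≤ ((r - d : ℝ) : EReal) := by
    apply iSup_le
    intro j
    have hxj : A i j + (x j : EReal) ≤ r := hr ▸ le_iSup (fun j => A i j + (x j : EReal)) j
    have hyj : A i j + (y j : EReal) ≤ r := hr' ▸ le_iSup (fun j => A i j + (y j : EReal)) j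
    have hAj := hA i j
    generalize A i j = a at *
    induction a with
    | bot => simp
    | top => exact absurd rfl hAj
    | coe a =>
      norm_cast at hxj hyj ⊢
      rcases max_cases (x j) (y j) with h | h <;> linarith [h.1]
  rw [hr] at h3
  have h5 := h3.trans h4
  norm_cast at h5
  linarith
end
end

section
/- (Theorem 3, necessity) Under the standing assumptions on the global optimization problem, if the problem is solvable and has a unique globally optimal solution (there is exactly one x̃ ∈ 𝒳 with F_i(x) ≥ F_i(x̃) for every x ∈ 𝒳 and every i), then k_j > 0 for every j ∈ Fin n. -/
open scoped BigOperators

noncomputable section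

theorem stmt_14 {m n : ℕ} (hm : 1 ≤ m) (hn : 1 ≤ n)
    (A : Matrix (Fin m) (Fin n) EReal) (hA : ∀ i j, A i j ≠ ⊤)
    (k : Fin n → ℝ) (hk : ∀ j, 0 ≤ k j) (hk0 : ∃ j, k j ≠ 0) (c : ℝ)
    (hrow : ∀ i, ∃ j, A i j ≠ ⊥)
    (hcol : ∀ j, (∀ i, A i j = ⊥) → 0 < k j)
    (hsolv : ∃ xt : Fin n → ℝ, IsOptimal A k c xt)
    (huniq : ∃! xt : Fin n → ℝ, IsOptimal A k c xt) :
    ∀ j, 0 < k j := by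
  intro j
  by_contra hj
  have hkj : k j = 0 := le_antisymm (not_lt.mp hj) (hk j)
  obtain ⟨xt, ⟨hfeas, hopt⟩, hu⟩ := huniq
  have hle : ∀ l, Function.update xt j (xt j - 1) l ≤ xt l := by
    intro l
    by_cases h : l = j
    · subst h
      simp
    · simp [h]
  have hfeas2 : ∑ l, k l * Function.update xt j (xt j - 1) l = c := by
    rw [← hfeas]
    refine Finset.sum_congr rfl fun l _ => ?_
    by_cases h : l = j
    · subst h
      simp [hkj]
    · simp [h]
  have hnew : IsOptimal A k c (Function.update xt j (xt j - 1)) := by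
    refine ⟨hfeas2, fun x hx i => le_trans ?_ (hopt x hx i)⟩
    exact iSup_mono fun l => add_le_add le_rfl (EReal.coe_le_coe_iff.mpr (hle l))
  have h := congrFun (hu _ hnew) j
  simp at h
end
end

section
/- (Theorem 3, combined) Under the standing assumptions on the global optimization problem, assume the problem is solvable. Then the problem has a unique globally optimal solution if and only if k_j > 0 for every j ∈ Fin n. -/
open scoped BigOperators

noncomputable section

theorem stmt_15 {m n : ℕ} (hm : 1 ≤ m) (hn : 1 ≤ n)
    (A : Matrix (Fin m) (Fin n) EReal) (hA : ∀ i j, A i j ≠ ⊤)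
    (k : Fin n → ℝ) (hk : ∀ j, 0 ≤ k j) (hk0 : ∃ j, k j ≠ 0) (c : ℝ)
    (hrow : ∀ i, ∃ j, A i j ≠ ⊥)
    (hcol : ∀ j, (∀ i, A i j = ⊥) → 0 < k j)
    (hsolv : ∃ xt : Fin n → ℝ, IsOptimal A k c xt) :
    (∃! xt : Fin n → ℝ, IsOptimal A k c xt) ↔ ∀ j, 0 < k j := by
  constructor
  · rintro ⟨xt, hxt, huniq⟩ j
    by_contra hj
    have hj0 : k j = 0 := le_antisymm (not_lt.mp hj) (hk j)
    have hopt : IsOptimal A k c (Function.update xt j (xt j - 1)) := by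
      refine ⟨?_, ?_⟩
      · rw [← hxt.1]
        refine Finset.sum_congr rfl fun l _ => ?_
        by_cases hl : l = j
        · subst hl; simp [hj0]
        · simp [Function.update_of_ne hl]
      · intro x hx i
        refine le_trans ?_ (hxt.2 x hx i)
        refine iSup_mono fun l => ?_
        refine add_le_add le_rfl ?_
        by_cases hl : l = j
        · subst hl
          rw [Function.update_self]
          exact EReal.coe_le_coe_iff.mpr (by linarith)
        · rw [Function.update_of_ne hl]
    have h := congrFun (huniq _ hopt) j
    rw [Function.update_self] at h
    linarith
  · intro hpos
    obtain ⟨x, hx⟩ := hsolv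
    refine ⟨x, hx, fun y hy => ?_⟩
    by_contra hne
    have hnle : ∃ l, x l < y l := by
      by_contra hcon
      push Not at hcon
      apply hne
      have hs : ∑ l, k l * y l = ∑ l, k l * x l := by rw [hx.1, hy.1]
      have h2 := (Finset.sum_eq_sum_iff_of_le
        (fun l _ => mul_le_mul_of_nonneg_left (hcon l) (hk l))).mp hs
      funext l
      exact mul_left_cancel₀ (hpos l).ne' (h2 l (Finset.mem_univ l))
    obtain ⟨l, hl⟩ := hnle
    have hK : 0 < ∑ j, k j := Finset.sum_pos (fun j _ => hpos j) ⟨l, Finset.mem_univ l⟩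
    have hZ : c < ∑ j, k j * max (x j) (y j) := by
      rw [← hx.1]
      refine Finset.sum_lt_sum
        (fun j _ => mul_le_mul_of_nonneg_left (le_max_left _ _) (hk j))
        ⟨l, Finset.mem_univ l, mul_lt_mul_of_pos_left (lt_max_of_lt_right hl) (hpos l)⟩
    obtain ⟨d, hd⟩ : ∃ d, d = ((∑ j, k j * max (x j) (y j)) - c) / ∑ j, k j := ⟨_, rfl⟩
    have hd0 : 0 < d := by rw [hd]; exact div_pos (by linarith) hK
    have hfeas : ∑ j, k j * (max (x j) (y j) - d) = c := by
      simp only [mul_sub, Finset.sum_sub_distrib]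
      rw [← Finset.sum_mul, hd, mul_div_cancel₀ _ hK.ne']
      ring
    have i : Fin m := ⟨0, hm⟩
    have h1 := hx.2 _ hfeas i
    have h2 := hy.2 _ hfeas i
    haveI : Nonempty (Fin n) := ⟨l⟩
    obtain ⟨j, hj⟩ := exists_eq_ciSup_of_finite
      (f := fun j => A i j + ((max (x j) (y j) - d : ℝ) : EReal))
    have hF : objF A (fun j => max (x j) (y j) - d) i
        = A i j + ((max (x j) (y j) - d : ℝ) : EReal) := hj.symm
    rw [hF] at h1 h2
    have hx3 : A i j + (x j : EReal) ≤ objF A x i :=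
      le_iSup (fun j => A i j + (x j : EReal)) j
    have hy3 : A i j + (y j : EReal) ≤ objF A y i :=
      le_iSup (fun j => A i j + (y j : EReal)) j
    have h4 := hx3.trans h1
    have h5 := hy3.trans h2
    by_cases hb : A i j = ⊥
    · obtain ⟨p, hp⟩ := hrow i
      have h6 : A i p + (x p : EReal) ≤ objF A x i :=
        le_iSup (fun j => A i j + (x j : EReal)) p
      have h7 := h6.trans h1
      rw [hb, EReal.bot_add, le_bot_iff, EReal.add_eq_bot_iff] at h7
      rcases h7 with h7 | h7
      · exact hp h7
      · exact EReal.coe_ne_bot _ h7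
    · lift A i j to ℝ using ⟨hA i j, hb⟩ with a
      norm_cast at h4 h5
      rcases max_choice (x j) (y j) with h | h <;> rw [h] at h4 h5 <;> linarith
end
end

section
/- (Theorem 4, inclusion optimal ⊆ S) Under the standing assumptions on the global optimization problem, assume the problem is solvable. Then every globally optimal solution x̃ : Fin n → ℝ satisfies (x̃_j : EReal) ≤ x*_j(A,b) for all j with k_j = 0 and (x̃_j : EReal) = x*_j(A,b) for all j with k_j > 0. -/
open scoped BigOperators

noncomputable section

theorem stmt_17 {m n : ℕ} (hm : 1 ≤ m) (hn : 1 ≤ n)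
    (A : Matrix (Fin m) (Fin n) EReal) (hA : ∀ i j, A i j ≠ ⊤)
    (k : Fin n → ℝ) (hk : ∀ j, 0 ≤ k j) (hk0 : ∃ j, k j ≠ 0) (c : ℝ)
    (hrow : ∀ i, ∃ j, A i j ≠ ⊥)
    (hcol : ∀ j, (∀ i, A i j = ⊥) → 0 < k j)
    (hsolv : ∃ xt : Fin n → ℝ, IsOptimal A k c xt) :
    ∀ xt : Fin n → ℝ, IsOptimal A k c xt →
      (∀ j, k j = 0 → (xt j : EReal) ≤ xstar A (glb A k c) j) ∧
      (∀ j, 0 < k j → (xt j : EReal) = xstar A (glb A k c) j) := by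
  intro xt hopt
  obtain ⟨hxt, hmin⟩ := hopt
  -- Step 1: entries in the columns of `J` are finite
  have step1 : ∀ i j, 0 < k j → A i j ≠ ⊥ := by
    intro i j0 hj0 hbot
    set s : ℝ := (∑ j ∈ Finset.univ.erase j0, k j) / k j0 with hs
    have hks : k j0 * s = ∑ j ∈ Finset.univ.erase j0, k j := by
      rw [hs]; field_simp
    let x : Fin n → ℝ := fun j => if j = j0 then xt j0 + s else xt j - 1
    have hx : ∑ j, k j * x j = c := by
      rw [← hxt, ← Finset.add_sum_erase _ _ (Finset.mem_univ j0),
        ← Finset.add_sum_erase _ (fun j => k j * xt j) (Finset.mem_univ j0)]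
      have h1 : ∑ j ∈ Finset.univ.erase j0, k j * x j
          = ∑ j ∈ Finset.univ.erase j0, (k j * xt j - k j) := by
        apply Finset.sum_congr rfl
        intro j hj
        have : j ≠ j0 := Finset.ne_of_mem_erase hj
        simp only [x, if_neg this]
        ring
      rw [h1, Finset.sum_sub_distrib]
      simp only [x, if_true]
      linarith
    have hle := hmin x hx i
    haveI : Nonempty (Fin n) := ⟨j0⟩
    obtain ⟨j1, hj1⟩ := exists_eq_ciSup_of_finite (f := fun j => A i j + (x j : EReal))
    have hle' : ∀ j, A i j + (xt j : EReal) ≤ A i j1 + (x j1 : EReal) := by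
      intro j
      refine le_trans (le_iSup (fun j => A i j + (xt j : EReal)) j) ?_
      refine le_trans hle ?_
      exact hj1.ge
    have hne : A i j1 ≠ ⊥ := by
      intro hb
      obtain ⟨j2, hj2⟩ := hrow i
      have := hle' j2
      rw [hb, EReal.bot_add, le_bot_iff, EReal.add_eq_bot_iff] at this
      rcases this with h | h
      · exact hj2 h
      · exact EReal.coe_ne_bot _ h
    have hj10 : j1 ≠ j0 := fun h => hne (h ▸ hbot)
    have h := hle' j1
    rw [← EReal.coe_toReal (hA i j1) hne] at h
    simp only [x, if_neg hj10] at h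
    norm_cast at h
    linarith
  set K : ℝ := ∑ j ∈ Jset k, k j with hK
  have hKpos : 0 < K := by
    apply Finset.sum_pos
    · intro j hj
      exact (Finset.mem_filter.mp hj).2
    · obtain ⟨j, hj⟩ := hk0
      exact ⟨j, Finset.mem_filter.mpr ⟨Finset.mem_univ _, lt_of_le_of_ne (hk j) hj.symm⟩⟩
  have hsumJ : ∀ f : Fin n → ℝ, ∑ j ∈ Jset k, k j * f j = ∑ j, k j * f j := by
    intro f
    apply Finset.sum_subset (Finset.subset_univ _)
    intro j _ hj
    have : ¬ 0 < k j := fun h => hj (Finset.mem_filter.mpr ⟨Finset.mem_univ _, h⟩)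
    have : k j = 0 := le_antisymm (not_lt.mp this) (hk j)
    simp [this]
  have hKall : K = ∑ j, k j := by simpa using hsumJ (fun _ => 1)
  let a : Fin m → Fin n → ℝ := fun i j => (A i j).toReal
  have ha : ∀ i j, A i j ≠ ⊥ → A i j = (a i j : EReal) :=
    fun i j h => (EReal.coe_toReal (hA i j) h).symm
  let b : Fin m → ℝ := fun i => ((∑ j, k j * a i j) + c) / K
  have hbK : ∀ i, b i * K = (∑ j, k j * a i j) + c := by
    intro i
    simp only [b]
    field_simp
  have hb : ∀ i, glb A k c i = (b i : EReal) := by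
    intro i
    have h1 : ∑ j ∈ Jset k, (k j : EReal) * A i j
        = ((∑ j ∈ Jset k, k j * a i j : ℝ) : EReal) := by
      have hcoe : ((∑ j ∈ Jset k, k j * a i j : ℝ) : EReal)
          = ∑ j ∈ Jset k, ((k j * a i j : ℝ) : EReal) :=
        map_sum (⟨⟨Real.toEReal, EReal.coe_zero⟩, EReal.coe_add⟩ : ℝ →+ EReal) _ _
      rw [hcoe]
      apply Finset.sum_congr rfl
      intro j hj
      rw [ha i j (step1 i j (Finset.mem_filter.mp hj).2), EReal.coe_mul]
    unfold glb
    rw [h1, hsumJ, ← EReal.coe_add, ← EReal.coe_div]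
  -- Step 3: `F(xt) ≤ b`
  have step3 : ∀ i j, A i j + (xt j : EReal) ≤ (b i : EReal) := by
    intro i j
    have hx : ∑ j, k j * (b i - a i j) = c := by
      simp only [mul_sub, Finset.sum_sub_distrib]
      rw [← Finset.sum_mul, ← hKall]
      linarith [hbK i]
    refine le_trans (le_iSup (fun j => A i j + (xt j : EReal)) j) ?_
    refine le_trans (hmin _ hx i) ?_
    refine iSup_le fun j' => ?_
    by_cases h : A i j' = ⊥
    · rw [h, EReal.bot_add]; exact bot_le
    · rw [ha i j' h, ← EReal.coe_add]
      norm_cast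
      linarith
  have hsub : ∀ j, (xt j : EReal) ≤ xstar A (glb A k c) j := by
    intro j
    refine le_iInf fun i => ?_
    unfold sSub
    split_ifs with h
    · exact le_top
    · have h3 := step3 i j
      rw [hb, ha i j h, ← EReal.coe_sub]
      rw [ha i j h] at h3
      norm_cast at h3 ⊢
      linarith
  refine ⟨fun j _ => hsub j, fun j hj => le_antisymm (hsub j) ?_⟩
  let i : Fin m := ⟨0, hm⟩
  refine le_trans (iInf_le _ i) ?_
  have h := step1 i j hj
  unfold sSub
  rw [if_neg h, hb, ha i j h, ← EReal.coe_sub]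
  norm_cast
  have hzero : ∑ j, k j * (b i - a i j - xt j) = 0 := by
    simp only [mul_sub, Finset.sum_sub_distrib]
    rw [← Finset.sum_mul, ← hKall, hxt]
    linarith [hbK i]
  have hnn : ∀ j ∈ Finset.univ, 0 ≤ k j * (b i - a i j - xt j) := by
    intro j _
    rcases (hk j).eq_or_lt with h0 | h0
    · simp [← h0]
    · have h3 := step3 i j
      rw [ha i j (step1 i j h0)] at h3
      norm_cast at h3
      exact mul_nonneg h0.le (by linarith)
  have := (Finset.sum_eq_zero_iff_of_nonneg hnn).mp hzero j (Finset.mem_univ _)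
  rcases mul_eq_zero.mp this with h0 | h0
  · exact absurd h0 hj.ne'
  · linarith
end
end
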